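/- Assume the standing Lyapunov-pair setup for f: Y -> Y with nonempty compact isolated invariant set K and resulting positively f-invariant, f-admissible isolating neighborhood B, let f_n -> f be continuous maps such that N' is {f_{n_m}}-admissible for every subsequence of (f_n), and let K_n denote the maximal f_n-invariant set in B. Then there are delta > 0 and n_0 such that for all n >= n_0 there exist closed, positively f_n-invariant sets N_n and N_n' with N_n contained in U_delta(K), U_delta(K) contained in N_n', and N_n' contained in B; moreover K is contained in int(N_n), and there is eps > 0 with U_eps(K_n) contained in N_n'. -/

import Mathlib

open MeasureTheory Topology Filter Metric Set
open scoped ENNReal NNReal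

noncomputable section

variable {Y : Type*}

/-- A set `N` is positively invariant under `g`. -/
def PosInvariant (g : Y → Y) (N : Set Y) : Prop :=
  ∀ x ∈ N, g x ∈ N

/-- There is a full left solution of `g` in `N` through `x` (indexed so that `u n = x_{-n}`). -/
def FullLeftSolution (g : Y → Y) (N : Set Y) (x : Y) : Prop :=
  ∃ u : ℕ → Y, u 0 = x ∧ (∀ k, g (u (k + 1)) = u k) ∧ ∀ k, u k ∈ N

/-- The maximal positively invariant subset `A⁺(N)` of `N`. -/
def aPlus (g : Y → Y) (N : Set Y) : Set Y :=
  {x | x ∈ N ∧ ∀ k : ℕ, g^[k] x ∈ N}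

/-- The maximal negatively invariant subset `A⁻(N)` of `N`. -/
def aMinus (g : Y → Y) (N : Set Y) : Set Y :=
  {x | x ∈ N ∧ FullLeftSolution g N x}

/-- The maximal invariant subset `A(N) = A⁺(N) ∩ A⁻(N)` of `N`. -/
def maxInv (g : Y → Y) (N : Set Y) : Set Y :=
  aPlus g N ∩ aMinus g N

/-- `N` is an isolating neighborhood of the isolated invariant set `K` for `g`. -/
def IsIsolatingNbhd [TopologicalSpace Y] (g : Y → Y) (K N : Set Y) : Prop :=
  IsClosed N ∧ K ⊆ interior N ∧ maxInv g N = K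

/-- `N` is `{gₙ}`-admissible: endpoints of longer and longer orbit segments staying in `N`
have a convergent subsequence. -/
def SeqAdmissible [TopologicalSpace Y] (g : ℕ → Y → Y) (N : Set Y) : Prop :=
  ∀ (x : ℕ → Y) (m : ℕ → ℕ), Tendsto m atTop atTop →
    (∀ n, ∀ k ≤ m n, (g n)^[k] (x n) ∈ N) →
    ∃ (y : Y) (φ : ℕ → ℕ), StrictMono φ ∧
      Tendsto (fun j => (g (φ j))^[m (φ j)] (x (φ j))) atTop (𝓝 y)

/-- `N` is `g`-admissible. -/
def Admissible [TopologicalSpace Y] (g : Y → Y) (N : Set Y) : Prop :=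
  SeqAdmissible (fun _ => g) N

/-- `gₙ → g` in the sense that `gₙ(xₙ) → g(x)` whenever `xₙ → x`. -/
def MapSeqConv [TopologicalSpace Y] (g : ℕ → Y → Y) (f : Y → Y) : Prop :=
  ∀ (x : ℕ → Y) (x₀ : Y), Tendsto x atTop (𝓝 x₀) →
    Tendsto (fun n => g n (x n)) atTop (𝓝 (f x₀))

/-- The set `P₁^ε = N ∩ cl {x ∈ int N' : φ(x) < ε}` from the Lyapunov-pair construction. -/
def P1set [TopologicalSpace Y] (N N' : Set Y) (φ : Y → ℝ) (ε : ℝ) : Set Y :=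
  N ∩ closure {x | x ∈ interior N' ∧ φ x < ε}

/-- The set `V(a) = {x ∈ int B : φ(x) < a}`. -/
def Vset [TopologicalSpace Y] (B : Set Y) (φ : Y → ℝ) (a : ℝ) : Set Y :=
  {x | x ∈ interior B ∧ φ x < a}

/-- The standing Lyapunov-pair setup: a continuous map `f` with a nonempty compact isolated
invariant set `K`, `f`-admissible isolating neighborhoods `N ⊆ int N' ∩ f⁻¹(int N')` with
`A⁻(N) = A(N) = K`, and a Lyapunov pair `(φ, γ)` on a neighborhood `W` of `K`. -/
structure LyapunovSetup (Y : Type*) [MetricSpace Y] where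
  f : Y → Y
  hf : Continuous f
  K : Set Y
  N : Set Y
  N' : Set Y
  W : Set Y
  phi : Y → ℝ
  gam : Y → ℝ
  hK_ne : K.Nonempty
  hK_cpt : IsCompact K
  hN_bdd : Bornology.IsBounded N
  hN'_bdd : Bornology.IsBounded N'
  hN_iso : IsIsolatingNbhd f K N
  hN'_iso : IsIsolatingNbhd f K N'
  hN_adm : Admissible f N
  hN'_adm : Admissible f N'
  hN_sub : N ⊆ interior N' ∩ f ⁻¹' (interior N')
  hAminus : aMinus f N = K
  hW_nbhd : K ⊆ interior W
  hW_sub : W ⊆ N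
  hW_dist : ∃ δ : ℝ, 0 < δ ∧ ∀ x ∈ W, ∀ y ∈ frontier N', δ ≤ dist x y
  hphi_cont : ContinuousOn phi W
  hgam_cont : ContinuousOn gam W
  hphi_nonneg : ∀ x ∈ W, 0 ≤ phi x
  hgam_nonneg : ∀ x ∈ W, 0 ≤ gam x
  hK_zero : ∀ x ∈ K, phi x = 0 ∧ gam x = 0
  hmono : ∀ x ∈ W, f x ∈ W → phi (f x) ≤ phi x ∧ gam x ≤ gam (f x)
  hphi_zero : ∀ x ∈ W, phi x = 0 → x ∈ aMinus f N
  hphi_seq : ∀ x : ℕ → Y, (∀ n, x n ∈ W) → Tendsto (fun n => phi (x n)) atTop (𝓝 0) →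
    ∃ (y : Y) (σ : ℕ → ℕ), StrictMono σ ∧ Tendsto (fun n => x (σ n)) atTop (𝓝 y)
  eps0 : ℝ
  eps0_pos : 0 < eps0
  hP1 : ∀ ε : ℝ, 0 < ε → ε ≤ eps0 →
    K ⊆ interior (P1set N N' phi ε) ∧ P1set N N' phi ε ⊆ W ∧
    (∀ x ∈ P1set N N' phi ε, f x ∈ N → f x ∈ P1set N N' phi ε) ∧
    (∀ x ∈ P1set N N' phi ε, f x ∉ N → ε ≤ gam x)

/-- Weak convergence of a sequence with respect to an auxiliary topology `τ`. -/
def WConv (τ : TopologicalSpace Y) (u : ℕ → Y) (y : Y) : Prop :=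
  Tendsto u atTop (@nhds Y τ y)

/-- The weak ω-limit set of `N` under `g` with respect to the topology `τ`. -/
def omegaWeak (τ : TopologicalSpace Y) (g : Y → Y) (N : Set Y) : Set Y :=
  {y | ∃ (x : ℕ → Y) (m : ℕ → ℕ), (∀ n, x n ∈ N) ∧ Tendsto m atTop atTop ∧
    WConv τ (fun n => g^[m n] (x n)) y}

/-- `K` is a weak attractor for `g` with respect to the weak topology `τ`: it admits a
positively `g`-invariant isolating neighborhood `N` with `ω^weak(N) ⊆ K`. -/
def IsWeakAttractor [TopologicalSpace Y] (τ : TopologicalSpace Y) (g : Y → Y)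
    (K : Set Y) : Prop :=
  ∃ N : Set Y, IsIsolatingNbhd g K N ∧ PosInvariant g N ∧ omegaWeak τ g N ⊆ K

/-- A set is sequentially compact with respect to the topology `τ`. -/
def WSeqCompact (τ : TopologicalSpace Y) (S : Set Y) : Prop :=
  ∀ u : ℕ → Y, (∀ n, u n ∈ S) →
    ∃ y ∈ S, ∃ σ : ℕ → ℕ, StrictMono σ ∧ WConv τ (fun k => u (σ k)) y

theorem conv_subseq {Y : Type*} [MetricSpace Y] {fn : ℕ → Y → Y} {f : Y → Y}
    (h : MapSeqConv fn f) {σ : ℕ → ℕ} (hσ : StrictMono σ) {z : ℕ → Y} {z₀ : Y}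
    (hz : Tendsto z atTop (𝓝 z₀)) :
    Tendsto (fun n => fn (σ n) (z n)) atTop (𝓝 (f z₀)) := by
  have hu : Tendsto (Function.extend σ z (fun _ => z₀)) atTop (𝓝 z₀) := by
    rw [Metric.tendsto_atTop] at hz ⊢
    intro ε hε
    obtain ⟨M, hM⟩ := hz ε hε
    refine ⟨σ M, fun k hk => ?_⟩
    by_cases hr : ∃ j, σ j = k
    · obtain ⟨j, rfl⟩ := hr
      rw [hσ.injective.extend_apply]
      exact hM j (hσ.le_iff_le.1 hk)
    · rw [Function.extend_apply' _ _ _ hr]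
      simpa using hε
  have h2 := (h _ _ hu).comp hσ.tendsto_atTop
  refine h2.congr fun n => ?_
  simp [Function.comp, hσ.injective.extend_apply]

theorem conv_iter {Y : Type*} [MetricSpace Y] {fn : ℕ → Y → Y} {f : Y → Y}
    (h : MapSeqConv fn f) {σ : ℕ → ℕ} (hσ : StrictMono σ) {z : ℕ → Y} {z₀ : Y}
    (hz : Tendsto z atTop (𝓝 z₀)) (k : ℕ) :
    Tendsto (fun n => (fn (σ n))^[k] (z n)) atTop (𝓝 (f^[k] z₀)) := by
  induction k with
  | zero => simpa using hz
  | succ k ih =>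
    simp only [Function.iterate_succ_apply']
    exact conv_subseq h hσ ih

/-- Limits of endpoints of long orbit segments in `C`. -/
def limSet {Y : Type*} [MetricSpace Y] (fn : ℕ → Y → Y) (C : Set Y) : Set Y :=
  {y | ∃ (σ : ℕ → ℕ) (x : ℕ → Y) (m : ℕ → ℕ), StrictMono σ ∧ Tendsto m atTop atTop ∧
    (∀ n, ∀ k ≤ m n, (fn (σ n))^[k] (x n) ∈ C) ∧
    Tendsto (fun n => (fn (σ n))^[m n] (x n)) atTop (𝓝 y)}

theorem limSet_sub {Y : Type*} [MetricSpace Y] {fn : ℕ → Y → Y} {C : Set Y} (hC : IsClosed C) :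
    limSet fn C ⊆ C := by
  rintro y ⟨σ, x, m, -, -, hin, hy⟩
  exact hC.mem_of_tendsto hy (Eventually.of_forall fun n => hin n _ le_rfl)

theorem limSet_pre {Y : Type*} [MetricSpace Y] {fn : ℕ → Y → Y} {f : Y → Y} {C N' : Set Y}
    (hCN : C ⊆ N') (hconv : MapSeqConv fn f)
    (hadm : ∀ σ : ℕ → ℕ, StrictMono σ → SeqAdmissible (fun m => fn (σ m)) N')
    (y : Y) (hy : y ∈ limSet fn C) : ∃ y' ∈ limSet fn C, f y' = y := by
  obtain ⟨σ, x, m, hσ, hm, hin, hy⟩ := hy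
  have hm' : Tendsto (fun n => m n - 1) atTop atTop := (tendsto_sub_atTop_nat 1).comp hm
  obtain ⟨y', ψ, hψ, hy'⟩ := hadm σ hσ x (fun n => m n - 1) hm'
    (fun n k hk => hCN (hin n k (by omega)))
  refine ⟨y', ⟨σ ∘ ψ, x ∘ ψ, fun j => m (ψ j) - 1, hσ.comp hψ, hm'.comp hψ.tendsto_atTop,
    fun n k hk => hin _ k (le_trans hk (Nat.sub_le _ _)), hy'⟩, ?_⟩
  have h1 := conv_subseq hconv (hσ.comp hψ) hy'
  have h2 := hy.comp hψ.tendsto_atTop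
  refine tendsto_nhds_unique (h1.congr' ?_) h2
  filter_upwards [(hm.comp hψ.tendsto_atTop).eventually_ge_atTop 1] with n hn
  simp only [Function.comp] at hn ⊢
  rw [← Function.iterate_succ_apply' (fn (σ (ψ n)))]
  congr 2
  omega

theorem limSet_aMinus {Y : Type*} [MetricSpace Y] {fn : ℕ → Y → Y} {f : Y → Y} {C N' : Set Y}
    (hC : IsClosed C) (hCN : C ⊆ N') (hconv : MapSeqConv fn f)
    (hadm : ∀ σ : ℕ → ℕ, StrictMono σ → SeqAdmissible (fun m => fn (σ m)) N') :
    limSet fn C ⊆ aMinus f C := by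
  intro y hy
  choose! p hp hfp using limSet_pre hCN hconv hadm
  have hmem : ∀ k, p^[k] y ∈ limSet fn C := by
    intro k
    induction k with
    | zero => exact hy
    | succ k ih => rw [Function.iterate_succ_apply']; exact hp _ ih
  refine ⟨limSet_sub hC hy, fun k => p^[k] y, rfl, fun k => ?_, fun k => limSet_sub hC (hmem k)⟩
  simp only [Function.iterate_succ_apply']
  exact hfp _ (hmem k)

theorem aMinus_mono {Y : Type*} {f : Y → Y} {C N : Set Y} (h : C ⊆ N) :
    aMinus f C ⊆ aMinus f N := by
  rintro y ⟨hy, u, h0, h1, h2⟩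
  exact ⟨h hy, u, h0, h1, fun k => h (h2 k)⟩

theorem endpoints_conv {Y : Type*} [MetricSpace Y] (S : LyapunovSetup Y) {fn : ℕ → Y → Y}
    (hconv : MapSeqConv fn S.f)
    (hadm : ∀ σ : ℕ → ℕ, StrictMono σ → SeqAdmissible (fun m => fn (σ m)) S.N')
    {C : Set Y} (hC : IsClosed C) (hCN : C ⊆ S.N) {σ : ℕ → ℕ} (hσ : StrictMono σ)
    (x : ℕ → Y) (m : ℕ → ℕ) (hm : Tendsto m atTop atTop)
    (hin : ∀ n, ∀ k ≤ m n, (fn (σ n))^[k] (x n) ∈ C) :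
    ∃ y ∈ S.K, ∃ ψ : ℕ → ℕ, StrictMono ψ ∧
      Tendsto (fun j => (fn (σ (ψ j)))^[m (ψ j)] (x (ψ j))) atTop (𝓝 y) := by
  have hNN : S.N ⊆ S.N' := fun z hz => interior_subset (S.hN_sub hz).1
  obtain ⟨y, ψ, hψ, hy⟩ := hadm σ hσ x m hm (fun n k hk => hNN (hCN (hin n k hk)))
  refine ⟨y, ?_, ψ, hψ, hy⟩
  rw [← S.hAminus]
  refine aMinus_mono hCN (limSet_aMinus hC (hCN.trans hNN) hconv hadm ?_)
  exact ⟨σ ∘ ψ, x ∘ ψ, m ∘ ψ, hσ.comp hψ, hm.comp hψ.tendsto_atTop, fun n => hin _, hy⟩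

theorem K_iter {Y : Type*} [MetricSpace Y] (S : LyapunovSetup Y) {x : Y} (hx : x ∈ S.K) (k : ℕ) :
    S.f^[k] x ∈ S.K := by
  have h1 : ∀ x ∈ S.K, S.f x ∈ S.K := by
    intro x hx
    have hx' := hx
    rw [← S.hN_iso.2.2] at hx' ⊢
    obtain ⟨⟨h1, h2⟩, h3, u, h4, h5, h6⟩ := hx'
    refine ⟨⟨h2 1, fun k => h2 (k+1)⟩, h2 1, fun k => Nat.casesOn k (S.f x) u, rfl, ?_, ?_⟩
    · rintro (_ | k)
      · simp [h4]
      · exact h5 k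
    · rintro (_ | k)
      · exact h2 1
      · exact h6 k
  induction k with
  | zero => exact hx
  | succ k ih => rw [Function.iterate_succ_apply']; exact h1 _ ih

theorem stability {Y : Type*} [MetricSpace Y] (S : LyapunovSetup Y) {fn : ℕ → Y → Y}
    (hconv : MapSeqConv fn S.f)
    (hadm : ∀ σ : ℕ → ℕ, StrictMono σ → SeqAdmissible (fun m => fn (σ m)) S.N')
    {C : Set Y} (hC : IsClosed C) (hCN : C ⊆ S.N) (hKC : S.K ⊆ interior C) :
    ∃ ρ : ℝ, 0 < ρ ∧ ∃ n₀ : ℕ, ∀ n, n₀ ≤ n → thickening ρ S.K ⊆ aPlus (fn n) C := by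
  by_contra! hcon
  have hfreq : ∀ j : ℕ, ∃ᶠ n in atTop,
      ∃ x ∈ thickening (1 / ((j : ℝ) + 1)) S.K, x ∉ aPlus (fn n) C := by
    intro j
    rw [frequently_atTop]
    intro a
    obtain ⟨n, hn, h⟩ := hcon (1 / ((j : ℝ) + 1)) (by positivity) a
    exact ⟨n, hn, Set.not_subset.1 h⟩
  obtain ⟨σ, hσ, hp⟩ := extraction_forall_of_frequently hfreq
  choose x hx hxn using hp
  have hx2 : ∀ j, ∃ a ∈ S.K, dist (x j) a < 1 / ((j : ℝ) + 1) :=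
    fun j => mem_thickening_iff.1 (hx j)
  choose a haK had using hx2
  obtain ⟨z, hzK, τ, hτ, hz⟩ := S.hK_cpt.tendsto_subseq haK
  have hxz : Tendsto (x ∘ τ) atTop (𝓝 z) := by
    refine tendsto_iff_of_dist ?_ |>.1 hz
    have h0 : Tendsto (fun j : ℕ => 1 / ((j : ℝ) + 1)) atTop (𝓝 0) :=
      tendsto_one_div_add_atTop_nhds_zero_nat
    refine squeeze_zero (fun _ => dist_nonneg) (fun j => ?_) (h0.comp hτ.tendsto_atTop)
    simp only [Function.comp]
    rw [dist_comm]
    exact (had _).le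
  have hout : ∀ j, ∃ k, (fn (σ (τ j)))^[k] (x (τ j)) ∉ C := by
    intro j
    by_contra! h
    exact hxn (τ j) ⟨h 0, h⟩
  classical
  let p : ℕ → ℕ := fun j => Nat.find (hout j)
  have hp1 : ∀ j, (fn (σ (τ j)))^[p j] (x (τ j)) ∉ C := fun j => Nat.find_spec (hout j)
  have hp2 : ∀ j, ∀ k < p j, (fn (σ (τ j)))^[k] (x (τ j)) ∈ C := by
    intro j k hk
    by_contra h
    exact Nat.find_min (hout j) hk h
  have hστ := hσ.comp hτ
  have hfix : ∀ k, ∀ᶠ j in atTop, (fn (σ (τ j)))^[k] (x (τ j)) ∈ C := by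
    intro k
    have := conv_iter hconv hστ hxz k
    exact this.eventually (mem_interior_iff_mem_nhds.1 (hKC (K_iter S hzK k)))
  have hpt : Tendsto p atTop atTop := by
    rw [Filter.tendsto_atTop]
    intro M
    have : ∀ᶠ j in atTop, ∀ k ∈ Finset.range M, (fn (σ (τ j)))^[k] (x (τ j)) ∈ C :=
      (Filter.eventually_all_finset _).2 fun k _ => hfix k
    filter_upwards [this] with j hj
    by_contra! h
    exact hp1 j (hj _ (Finset.mem_range.2 h))
  have hp0 : ∀ᶠ j in atTop, 1 ≤ p j := hpt.eventually_ge_atTop 1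
  obtain ⟨M, hM⟩ := eventually_atTop.1 hp0
  have hsh : StrictMono (fun j => σ (τ (j + M))) := fun i j hij => hστ (by omega)
  have hpM : Tendsto (fun j => p (j + M) - 1) atTop atTop :=
    (tendsto_sub_atTop_nat 1).comp (hpt.comp (tendsto_add_atTop_nat M))
  obtain ⟨y, hyK, ψ, hψ, hy⟩ := endpoints_conv S hconv hadm hC hCN hsh
    (fun j => x (τ (j + M))) (fun j => p (j + M) - 1) hpM
    (fun n k hk => hp2 _ k (by have := hM (n + M) (by omega); omega))
  have h1 := conv_subseq hconv (hsh.comp hψ) hy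
  have h2 := h1.eventually (mem_interior_iff_mem_nhds.1 (hKC (K_iter S hyK 1)))
  obtain ⟨j, hj⟩ := h2.exists
  simp only [Function.comp] at hj
  rw [← Function.iterate_succ_apply' (fn (σ (τ (ψ j + M))))] at hj
  have h3 := hM (ψ j + M) (by omega)
  rw [show (p (ψ j + M) - 1).succ = p (ψ j + M) by omega] at hj
  exact hp1 _ hj

theorem upper_semicont {Y : Type*} [MetricSpace Y] (S : LyapunovSetup Y) {fn : ℕ → Y → Y}
    (hconv : MapSeqConv fn S.f)
    (hadm : ∀ σ : ℕ → ℕ, StrictMono σ → SeqAdmissible (fun m => fn (σ m)) S.N')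
    {C : Set Y} (hC : IsClosed C) (hCN : C ⊆ S.N) {ρ : ℝ} (hρ : 0 < ρ) :
    ∃ n₀ : ℕ, ∀ n, n₀ ≤ n → maxInv (fn n) C ⊆ thickening ρ S.K := by
  by_contra! hcon
  have hfreq : ∀ _j : ℕ, ∃ᶠ n in atTop, ∃ x ∈ maxInv (fn n) C, x ∉ thickening ρ S.K := by
    intro j
    rw [frequently_atTop]
    intro a
    obtain ⟨n, hn, h⟩ := hcon a
    exact ⟨n, hn, Set.not_subset.1 h⟩
  obtain ⟨σ, hσ, hp⟩ := extraction_forall_of_frequently hfreq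
  choose x hx hxn using hp
  choose u hu0 hu1 hu2 using fun n => (hx n).2.2
  have hit : ∀ n j k, (fn (σ n))^[k] (u n (j + k)) = u n j := by
    intro n j k
    induction k with
    | zero => rfl
    | succ k ih =>
      rw [Function.iterate_succ_apply, ← add_assoc, hu1, ih]
  obtain ⟨y, hyK, ψ, hψ, hy⟩ := endpoints_conv S hconv hadm hC hCN hσ
    (fun n => u n n) (fun n => n) tendsto_id (by
      intro n k hk
      obtain ⟨i, rfl⟩ := Nat.exists_eq_add_of_le' hk
      rw [hit]
      exact hu2 _ _)
  have h2 := hy.eventually (isOpen_thickening.mem_nhds (self_subset_thickening hρ S.K hyK))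
  obtain ⟨j, hj⟩ := h2.exists
  have := hit (ψ j) 0 (ψ j)
  rw [zero_add] at this
  rw [this, hu0] at hj
  exact hxn _ hj

theorem aPlus_closed {Y : Type*} [MetricSpace Y] {g : Y → Y} (hg : Continuous g) {C : Set Y}
    (hC : IsClosed C) : IsClosed (aPlus g C) := by
  have : aPlus g C = C ∩ ⋂ k : ℕ, (g^[k]) ⁻¹' C := by
    ext x; simp [aPlus]
  rw [this]
  exact hC.inter (isClosed_iInter fun k => hC.preimage (hg.iterate k))

theorem aPlus_pos {Y : Type*} {g : Y → Y} {C : Set Y} : PosInvariant g (aPlus g C) :=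
  fun _ hx => ⟨hx.2 1, fun k => hx.2 (k + 1)⟩

/-- **Continuation corollary**: with `B = P₁^{δ₀}` the positively `f`-invariant admissible
isolating neighborhood of `K` and `fₙ → f` as before, for large `n` there are closed,
positively `fₙ`-invariant sets `Nₙ ⊆ U_δ(K) ⊆ Nₙ' ⊆ B` with `K ⊆ int Nₙ`, and some
`ε`-neighborhood of `Kₙ = A_{fₙ}(B)` is contained in `Nₙ'`. -/
theorem continuation_neighborhoods_of_attractor
    {Y : Type*} [MetricSpace Y] [CompleteSpace Y] [TopologicalSpace.SeparableSpace Y]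
    (S : LyapunovSetup Y)
    (δ₀ : ℝ) (hδ₀ : 0 < δ₀)
    (hB_pos : PosInvariant S.f (P1set S.N S.N' S.phi δ₀))
    (hB_adm : Admissible S.f (P1set S.N S.N' S.phi δ₀))
    (hB_iso : IsIsolatingNbhd S.f S.K (P1set S.N S.N' S.phi δ₀))
    (fn : ℕ → Y → Y) (hfn_cont : ∀ n, Continuous (fn n))
    (hfn_conv : MapSeqConv fn S.f)
    (hN'_adm : ∀ σ : ℕ → ℕ, StrictMono σ → SeqAdmissible (fun m => fn (σ m)) S.N') :
    ∃ δ : ℝ, 0 < δ ∧ ∃ n₀ : ℕ, ∀ n, n₀ ≤ n →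
      ∃ Nn Nn' : Set Y, IsClosed Nn ∧ IsClosed Nn' ∧
        PosInvariant (fn n) Nn ∧ PosInvariant (fn n) Nn' ∧
        Nn ⊆ Metric.thickening δ S.K ∧
        Metric.thickening δ S.K ⊆ Nn' ∧
        Nn' ⊆ P1set S.N S.N' S.phi δ₀ ∧
        S.K ⊆ interior Nn ∧
        ∃ ε : ℝ, 0 < ε ∧
          Metric.thickening ε (maxInv (fn n) (P1set S.N S.N' S.phi δ₀)) ⊆ Nn' := by
  have hBN : P1set S.N S.N' S.phi δ₀ ⊆ S.N := Set.inter_subset_left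
  obtain ⟨δ, hδ, n₁, h1⟩ := stability S hfn_conv hN'_adm hB_iso.1 hBN hB_iso.2.1
  obtain ⟨η, hη, hηB⟩ := S.hK_cpt.exists_cthickening_subset_open isOpen_interior hB_iso.2.1
  set r := min η (δ / 2) with hr
  have hr0 : 0 < r := lt_min hη (by linarith)
  have hrδ : r < δ := lt_of_le_of_lt (min_le_right _ _) (by linarith)
  have hrB : cthickening r S.K ⊆ P1set S.N S.N' S.phi δ₀ :=
    (cthickening_mono (min_le_left _ _) _).trans (hηB.trans interior_subset)
  obtain ⟨ρ, hρ, n₂, h2⟩ := stability S hfn_conv hN'_adm (C := cthickening r S.K)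
    isClosed_cthickening (hrB.trans hBN)
    ((self_subset_thickening hr0 _).trans (thickening_subset_interior_cthickening _ _))
  obtain ⟨n₃, h3⟩ := upper_semicont S hfn_conv hN'_adm hB_iso.1 hBN (half_pos hδ)
  refine ⟨δ, hδ, max n₁ (max n₂ n₃), fun n hn => ?_⟩
  have hn1 : n₁ ≤ n := by omega
  have hn2 : n₂ ≤ n := by omega
  have hn3 : n₃ ≤ n := by omega
  refine ⟨aPlus (fn n) (cthickening r S.K), aPlus (fn n) (P1set S.N S.N' S.phi δ₀),
    aPlus_closed (hfn_cont n) isClosed_cthickening, aPlus_closed (hfn_cont n) hB_iso.1,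
    aPlus_pos, aPlus_pos,
    fun x hx => cthickening_subset_thickening' hδ hrδ _ hx.1, h1 n hn1, fun x hx => hx.1,
    ?_, δ / 2, half_pos hδ, ?_⟩
  · exact (self_subset_thickening hρ _).trans (interior_maximal (h2 n hn2) isOpen_thickening)
  · refine Set.Subset.trans ?_ (h1 n hn1)
    intro x hx
    obtain ⟨z, hz, hxz⟩ := mem_thickening_iff.1 hx
    obtain ⟨w, hw, hzw⟩ := mem_thickening_iff.1 (h3 n hn3 hz)
    exact mem_thickening_iff.2 ⟨w, hw, by linarith [dist_triangle x z w]⟩
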